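/- Let n ≥ 1, P_n = ℤ[X_1,…,X_n], and let ∂_{w0} be the composite of Demazure operators associated to a reduced expression of the longest element w0 of S_n. Then: (a) for every P ∈ P_n, ∂_{w0}(P) is a symmetric polynomial, i.e., ∂_{w0}(P) ∈ P_n^{S_n}; and (b) ∂_{w0} is a symmetrizing form for P_n over P_n^{S_n}: the P_n^{S_n}-linear map P_n → Hom_{P_n^{S_n}}(P_n, P_n^{S_n}), a ↦ (b ↦ ∂_{w0}(ab)), is bijective. -/

import Mathlib

open MvPolynomial

/-- The adjacent transposition `s i = (i, i+1)` in the symmetric group on `{1, …, n+1}`. -/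
def adjTrans (n : ℕ) (i : Fin n) : Equiv.Perm (Fin (n + 1)) :=
  Equiv.swap i.castSucc i.succ

/-!
Expand the kernel `∏_{i < j} (Y_j - X_i)` as `∑_S f_S(X) g_S(Y)` with `f_S = leftFactor R S` and
`g_S = rightFactor R S`. Substituting `X_i ↦ X_{w i}` and `Y_j ↦ X_{w' j}` kills it unless `w = w'`,
in which case it becomes the `w`-translate of the Vandermonde product `V`. Hence
`V b = ∑_S g_S A(f_S b)`, where `A` is antisymmetrization.

Let `∂` be the composite along a word whose length is the number of positive roots. It commutes with
multiplication by symmetric polynomials and lowers the degree by its length, so it kills every `g_S`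
except the one of top degree, which goes to a constant `c`. Applying `∂` to the expansion of `V² b`
gives `V ∂(b) = c A(b)`; therefore `∂` has symmetric values and `∑_S g_S ∂(f_S b) = c b`.

That `c` is a unit is seen by localization: `∑_S f_S(X_w) ∂(g_S)` equals `c` for every `w`, whereas
applying the operators `∂_i` one by one along a reduced word of `w` shows that for this `w` it
divides the `w`-translate of `V`, whose leading coefficient is `±1`. So the `f_S` and the `c⁻¹ g_S`
are dual bases for the form `∂`.
-/

namespace Demazure

section DualBases

variable {R B ι : Type*} [CommSemiring R] [CommSemiring B] [Algebra R B] {S : Subalgebra R B}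

theorem map_mul_of_mem (φ : B →ₗ[S] B) {x : B} (hx : x ∈ S) (b : B) : φ (x * b) = x * φ b :=
  φ.map_smul (⟨x, hx⟩ : S) b

theorem existsUnique_eq_apply_mul_of_dualBases {t : B →ₗ[S] B} (ht : ∀ b, t b ∈ S)
    {s : Finset ι} {f g : ι → B} (hdual : ∀ b, ∑ k ∈ s, g k * t (f k * b) = b)
    {ψ : B →ₗ[S] B} (hψ : ∀ b, ψ b ∈ S) : ∃! a, ∀ b, ψ b = t (a * b) := by
  have eq_sum {a : B} (ha : ∀ b, ψ b = t (a * b)) : a = ∑ k ∈ s, g k * ψ (f k) := by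
    simp_rw [ha, mul_comm a, hdual]
  refine existsUnique_of_exists_of_unique ⟨∑ k ∈ s, ψ (g k) * f k, fun b => ?_⟩
    fun a a' ha ha' => (eq_sum ha).trans (eq_sum ha').symm
  calc ψ b = ∑ k ∈ s, ψ (t (f k * b) * g k) := by
        simp_rw [← map_sum, mul_comm (t _), hdual]
    _ = ∑ k ∈ s, t (ψ (g k) * (f k * b)) := by
        simp_rw [map_mul_of_mem ψ (ht _), map_mul_of_mem t (hψ _), mul_comm]
    _ = t ((∑ k ∈ s, ψ (g k) * f k) * b) := by
        simp_rw [← map_sum, Finset.sum_mul, mul_assoc]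

end DualBases

section Permutations

theorem exists_lt_apply_of_ne_one {α : Type*} [LinearOrder α] [WellFoundedLT α]
    {w : Equiv.Perm α} (hw : w ≠ 1) : ∃ i, i < w i := by
  by_contra! hle
  refine hw (Equiv.ext fun i => ?_)
  induction i using WellFoundedLT.induction with
  | ind i ih => exact (hle i).antisymm (not_lt.1 fun hlt => hlt.ne (w.injective (ih _ hlt)))

/-- The pairs `(i, j)` with `i < j`, i.e. the positive roots of type `A_{N-1}`. -/
def posPairs (N : ℕ) : Finset (Fin N × Fin N) :=
  Finset.univ.filter fun p => p.1 < p.2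

theorem mem_posPairs {N : ℕ} {p : Fin N × Fin N} : p ∈ posPairs N ↔ p.1 < p.2 := by
  simp [posPairs]

theorem card_posPairs (N : ℕ) : (posPairs N).card = N * (N - 1) / 2 := by
  have card_eq_sum : (posPairs N).card = ∑ j : Fin N, (j : ℕ) := by
    rw [posPairs, Finset.card_filter, Fintype.sum_prod_type_right]
    refine Finset.sum_congr rfl fun j _ => ?_
    rw [← Finset.card_filter, Finset.filter_gt_eq_Iio, Fin.card_Iio]
  rw [card_eq_sum, Fin.sum_univ_eq_sum_range fun j => j, Finset.sum_range_id]

/-- The number of inversions of a permutation, which is its Coxeter length. -/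
def inversions {N : ℕ} (w : Equiv.Perm (Fin N)) : ℕ :=
  ((posPairs N).filter fun p => w p.2 < w p.1).card

theorem inversions_one (N : ℕ) : inversions (1 : Equiv.Perm (Fin N)) = 0 :=
  Finset.card_eq_zero.2 (Finset.filter_false_of_mem fun _ hp => (mem_posPairs.1 hp).not_gt)

theorem inversions_revPerm (N : ℕ) :
    inversions (Fin.revPerm : Equiv.Perm (Fin N)) = (posPairs N).card := by
  rw [inversions, Finset.filter_true_of_mem]
  intro p hp
  simpa using mem_posPairs.1 hp

variable {n : ℕ}

theorem adjTrans_mul_cancel_left (i : Fin n) (w : Equiv.Perm (Fin (n + 1))) :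
    adjTrans n i * (adjTrans n i * w) = w :=
  Equiv.swap_mul_self_mul _ _ w

theorem adjTrans_lt_adjTrans (i : Fin n) {a b : Fin (n + 1)} (hab : a < b)
    (hne : ¬(a = i.castSucc ∧ b = i.succ)) : adjTrans n i a < adjTrans n i b := by
  simp only [adjTrans, Equiv.swap_apply_def]
  split_ifs <;> simp only [Fin.ext_iff, Fin.lt_def, Fin.val_castSucc, Fin.val_succ] at * <;> omega

theorem inversions_adjTrans_mul_le (i : Fin n) (w : Equiv.Perm (Fin (n + 1))) :
    inversions (adjTrans n i * w) ≤ inversions w + 1 := by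
  refine le_trans (Finset.card_le_card (t := insert (w⁻¹ i.castSucc, w⁻¹ i.succ)
    ((posPairs (n + 1)).filter fun p => w p.2 < w p.1)) fun p hp => ?_)
    (Finset.card_insert_le _ _)
  obtain ⟨hp, hinv⟩ := Finset.mem_filter.1 hp
  rw [Finset.mem_insert, Finset.mem_filter, or_iff_not_imp_right]
  intro hnot
  have hlt : w p.1 < w p.2 :=
    (w.injective.ne (mem_posPairs.1 hp).ne).lt_of_le (not_lt.1 fun h => hnot ⟨hp, h⟩)
  obtain ⟨h1, h2⟩ := not_not.1 fun hne => (adjTrans_lt_adjTrans i hlt hne).not_gt hinv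
  simp [← h1, ← h2]

theorem inversions_le_adjTrans_mul (i : Fin n) (w : Equiv.Perm (Fin (n + 1))) :
    inversions w ≤ inversions (adjTrans n i * w) + 1 := by
  simpa only [adjTrans_mul_cancel_left] using inversions_adjTrans_mul_le i (adjTrans n i * w)

end Permutations

section LeadingCoeff

open MonomialOrder

variable {R σ : Type*} [CommRing R]

theorem isRegular_of_isUnit_leadingCoeff {m : MonomialOrder σ} {P : MvPolynomial σ R}
    (hP : IsUnit (m.leadingCoeff P)) : IsRegular P :=
  isRegular_iff_mem_nonZeroDivisors.2
    (m.mem_nonZeroDivisors_of_leadingCoeff_mem_nonZeroDivisors hP.mem_nonZeroDivisors)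

theorem isUnit_of_C_dvd {m : MonomialOrder σ} {c : R} {P : MvPolynomial σ R}
    (hP : IsUnit (m.leadingCoeff P)) (hc : C c ∣ P) : IsUnit c :=
  isUnit_of_dvd_unit ((C_dvd_iff_dvd_coeff _ _).1 hc _) hP

variable [LinearOrder σ] [WellFoundedGT σ] {i j : σ}

theorem degree_X_lt_degree_X [Nontrivial R] (hij : i < j) :
    degLex.toSyn (degLex.degree (X j : MvPolynomial σ R)) <
      degLex.toSyn (degLex.degree (X i : MvPolynomial σ R)) := by
  rw [degree_X, degree_X]
  exact degLex_single_lt_iff.2 hij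

theorem degree_X_sub_X [Nontrivial R] (hij : i < j) :
    degLex.degree (X j - X i : MvPolynomial σ R) = Finsupp.single i 1 := by
  rw [← neg_sub, degree_neg, degree_sub_of_lt (degree_X_lt_degree_X hij), degree_X]

theorem leadingCoeff_X_sub_X (hij : i < j) :
    degLex.leadingCoeff (X j - X i : MvPolynomial σ R) = -1 := by
  nontriviality R
  rw [← neg_sub, leadingCoeff_neg, leadingCoeff_sub_of_lt (degree_X_lt_degree_X hij),
    leadingCoeff_X]

theorem isUnit_leadingCoeff_X_sub_X (hij : i < j) :
    IsUnit (degLex.leadingCoeff (X j - X i : MvPolynomial σ R)) := by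
  rw [leadingCoeff_X_sub_X hij]
  exact isUnit_one.neg

theorem isRegular_X_sub_X (hij : i < j) : IsRegular (X j - X i : MvPolynomial σ R) :=
  isRegular_of_isUnit_leadingCoeff (isUnit_leadingCoeff_X_sub_X hij)

theorem totalDegree_X_sub_X_mul (hij : i < j) {Q : MvPolynomial σ R} (hQ : Q ≠ 0) :
    ((X j - X i) * Q).totalDegree = Q.totalDegree + 1 := by
  rcases subsingleton_or_nontrivial R with _ | _
  · exact absurd (Subsingleton.elim Q 0) hQ
  rw [← degree_degLexDegree, ← degree_degLexDegree,
    degree_mul_of_isRegular_left (isUnit_leadingCoeff_X_sub_X hij).isRegular hQ,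
    degree_X_sub_X hij, map_add, Finsupp.degree_single, add_comm]

end LeadingCoeff

section Alternating

variable {R σ : Type*} [CommRing R] [Fintype σ] [DecidableEq σ]

/-- Alternating (skew-symmetric) polynomials: permuting the variables by `w` multiplies the
polynomial by the sign of `w`. -/
def IsAlternating (P : MvPolynomial σ R) : Prop :=
  ∀ w : Equiv.Perm σ, rename w P = Equiv.Perm.sign w • P

theorem IsAlternating.mul {P Q : MvPolynomial σ R} (hP : IsAlternating P) (hQ : IsAlternating Q) :
    (P * Q).IsSymmetric := fun w => by
  rw [map_mul, hP, hQ, smul_mul_smul_comm, Int.units_mul_self, one_smul]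

theorem IsAlternating.symmetric_mul {P Q : MvPolynomial σ R} (hP : P.IsSymmetric)
    (hQ : IsAlternating Q) : IsAlternating (P * Q) := fun w => by
  rw [map_mul, hP, hQ, mul_smul_comm]

theorem IsAlternating.isSymmetric_of_mul {P Q : MvPolynomial σ R} (hP : IsAlternating P)
    (hreg : IsRegular P) (hPQ : IsAlternating (P * Q)) : Q.IsSymmetric := fun w => by
  have h := hPQ w
  rw [map_mul, hP, smul_mul_assoc] at h
  exact hreg.left (smul_left_cancel _ h)

/-- The antisymmetrization `∑_w sgn(w) w(P)` of `P`. -/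
noncomputable def antisymmetrize (P : MvPolynomial σ R) : MvPolynomial σ R :=
  ∑ w : Equiv.Perm σ, Equiv.Perm.sign w • rename w P

theorem isAlternating_antisymmetrize (P : MvPolynomial σ R) :
    IsAlternating (antisymmetrize P) := fun w => by
  rw [antisymmetrize, map_sum, Finset.smul_sum]
  refine Fintype.sum_equiv (Equiv.mulLeft w) _ _ fun v => ?_
  rw [Units.smul_def, map_zsmul, ← Units.smul_def, rename_rename, Equiv.coe_mulLeft, smul_smul,
    Equiv.Perm.sign_mul, ← mul_assoc, Int.units_mul_self, one_mul, Equiv.Perm.coe_mul]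

end Alternating

section Kernel

variable (R : Type*) [CommRing R] {N : ℕ}

/-- The Vandermonde product `∏_{i < j} (X_j - X_i)`. -/
noncomputable def vandermonde (N : ℕ) : MvPolynomial (Fin N) R :=
  ∏ p ∈ posPairs N, (X p.2 - X p.1)

theorem vandermonde_eq_det (N : ℕ) :
    vandermonde R N = (Matrix.vandermonde (X : Fin N → MvPolynomial (Fin N) R)).det := by
  rw [Matrix.det_vandermonde, vandermonde, posPairs, Finset.prod_filter, Fintype.prod_prod_type]
  refine Finset.prod_congr rfl fun i _ => ?_
  rw [← Finset.prod_filter, Finset.filter_lt_eq_Ioi]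

theorem isAlternating_vandermonde : IsAlternating (vandermonde R N) := fun w => by
  rw [vandermonde_eq_det, AlgHom.map_det, Units.smul_def, zsmul_eq_mul, ← Matrix.det_permute]
  congr 1
  ext1 i j
  simp [Matrix.vandermonde_apply]

theorem isUnit_leadingCoeff_vandermonde :
    IsUnit (MonomialOrder.degLex.leadingCoeff (vandermonde R N)) := by
  have hroot (p) (hp : p ∈ posPairs N) :
      IsUnit (MonomialOrder.degLex.leadingCoeff (X p.2 - X p.1 : MvPolynomial (Fin N) R)) :=
    isUnit_leadingCoeff_X_sub_X (mem_posPairs.1 hp)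
  rw [vandermonde, MonomialOrder.leadingCoeff_prod_of_regular fun p hp => (hroot p hp).isRegular]
  exact IsUnit.prod_iff.2 hroot

theorem isRegular_vandermonde : IsRegular (vandermonde R N) :=
  isRegular_of_isUnit_leadingCoeff (isUnit_leadingCoeff_vandermonde R)

/-- The factor in the variables `X` of the summand of `∏_{i < j} (Y_j - X_i)` indexed by the set `S`
of pairs at which `Y_j` is selected. -/
noncomputable def leftFactor (S : Finset (Fin N × Fin N)) : MvPolynomial (Fin N) R :=
  ∏ p ∈ posPairs N \ S, (-X p.1)

/-- The factor in the variables `Y` of the summand of `∏_{i < j} (Y_j - X_i)` indexed by the set `S`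
of pairs at which `Y_j` is selected. -/
noncomputable def rightFactor (S : Finset (Fin N × Fin N)) : MvPolynomial (Fin N) R :=
  ∏ p ∈ S, X p.2

theorem leftFactor_posPairs : leftFactor R (posPairs N) = 1 := by
  rw [leftFactor, Finset.sdiff_self, Finset.prod_empty]

theorem totalDegree_rightFactor_le (S : Finset (Fin N × Fin N)) :
    (rightFactor R S).totalDegree ≤ S.card := by
  rcases subsingleton_or_nontrivial R with _ | _
  · rw [Subsingleton.elim (rightFactor R S) 0, totalDegree_zero]
    exact Nat.zero_le _
  refine (totalDegree_finsetProd _ _).trans_eq ?_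
  simp_rw [totalDegree_X, Finset.card_eq_sum_ones]

theorem prod_X_sub_X_eq_zero {w w' : Equiv.Perm (Fin N)} (hne : w ≠ w') :
    ∏ p ∈ posPairs N, (X (w' p.2) - X (w p.1) : MvPolynomial (Fin N) R) = 0 := by
  obtain ⟨i, hi⟩ := exists_lt_apply_of_ne_one (w := w'⁻¹ * w) fun h => hne (inv_mul_eq_one.1 h).symm
  refine Finset.prod_eq_zero (i := (i, (w'⁻¹ * w) i)) (mem_posPairs.2 hi) ?_
  rw [← Equiv.Perm.mul_apply, mul_inv_cancel_left, sub_self]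

theorem sum_rename_leftFactor_mul_rename_rightFactor (w w' : Equiv.Perm (Fin N)) :
    ∑ S ∈ (posPairs N).powerset, rename w (leftFactor R S) * rename w' (rightFactor R S) =
      if w = w' then rename w (vandermonde R N) else 0 := by
  have expand : ∑ S ∈ (posPairs N).powerset,
      rename w (leftFactor R S) * rename w' (rightFactor R S) =
        ∏ p ∈ posPairs N, (X (w' p.2) - X (w p.1)) := by
    simp_rw [sub_eq_add_neg, Finset.prod_add, leftFactor, rightFactor, map_prod, map_neg, rename_X,
      mul_comm]
  split_ifs with h
  · simp_rw [expand, h, vandermonde, map_prod, map_sub, rename_X]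
  · rw [expand, prod_X_sub_X_eq_zero R h]

theorem sum_rename_leftFactor_mul_rightFactor (w : Equiv.Perm (Fin N)) :
    ∑ S ∈ (posPairs N).powerset, rename w (leftFactor R S) * rightFactor R S =
      if w = 1 then vandermonde R N else 0 := by
  have h := sum_rename_leftFactor_mul_rename_rightFactor R w 1
  simp only [Equiv.Perm.coe_one, rename_id_apply] at h
  rw [h]
  split_ifs with hw
  · rw [hw, Equiv.Perm.coe_one, rename_id_apply]
  · rfl

variable {R}

theorem sum_rightFactor_mul_antisymmetrize (b : MvPolynomial (Fin N) R) :
    ∑ S ∈ (posPairs N).powerset, rightFactor R S * antisymmetrize (leftFactor R S * b) =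
      vandermonde R N * b := by
  calc
    _ = ∑ w : Equiv.Perm (Fin N), (∑ S ∈ (posPairs N).powerset,
          rename w (leftFactor R S) * rightFactor R S) * (Equiv.Perm.sign w • rename w b) := by
      simp_rw [antisymmetrize, Finset.mul_sum, map_mul, Finset.sum_mul]
      rw [Finset.sum_comm]
      refine Finset.sum_congr rfl fun w _ => Finset.sum_congr rfl fun S _ => ?_
      rw [mul_smul_comm, mul_smul_comm, mul_left_comm, mul_assoc]
    _ = vandermonde R N * b := by
      simp [sum_rename_leftFactor_mul_rightFactor]

end Kernel

section Operators

variable {R : Type*} [CommRing R] {n : ℕ}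
  {D : Fin n → MvPolynomial (Fin (n + 1)) R →ₗ[R] MvPolynomial (Fin (n + 1)) R}

theorem isRegular_simpleRoot (i : Fin n) :
    IsRegular (X i.succ - X i.castSucc : MvPolynomial (Fin (n + 1)) R) :=
  isRegular_X_sub_X i.castSucc_lt_succ

/-- `D` is the family of Demazure operators (divided differences) `∂_i`. -/
def IsDemazure (D : Fin n → MvPolynomial (Fin (n + 1)) R →ₗ[R] MvPolynomial (Fin (n + 1)) R) :
    Prop :=
  ∀ i P, (X i.succ - X i.castSucc) * D i P = P - rename (adjTrans n i) P

theorem IsDemazure.apply_symmetric_mul (hD : IsDemazure D) (i : Fin n)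
    {f : MvPolynomial (Fin (n + 1)) R} (hf : f.IsSymmetric) (P : MvPolynomial (Fin (n + 1)) R) :
    D i (f * P) = f * D i P := by
  refine (isRegular_simpleRoot i).left ?_
  beta_reduce
  rw [hD, map_mul, hf, mul_left_comm, hD, mul_sub]

theorem IsDemazure.totalDegree_apply_lt (hD : IsDemazure D) (i : Fin n)
    {P : MvPolynomial (Fin (n + 1)) R} (hP : D i P ≠ 0) :
    (D i P).totalDegree < P.totalDegree := by
  rw [← Nat.succ_le_iff, Nat.succ_eq_add_one, ← totalDegree_X_sub_X_mul i.castSucc_lt_succ hP, hD]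
  exact (totalDegree_sub _ _).trans (max_le le_rfl (totalDegree_rename_le _ _))

/-- The composite `∂_{i_1} ∘ ⋯ ∘ ∂_{i_r}` of the operators of `D` along the word
`l = [i_1, …, i_r]`. -/
noncomputable def wordOp
    (D : Fin n → MvPolynomial (Fin (n + 1)) R →ₗ[R] MvPolynomial (Fin (n + 1)) R)
    (l : List (Fin n)) : MvPolynomial (Fin (n + 1)) R →ₗ[R] MvPolynomial (Fin (n + 1)) R :=
  l.foldr (fun i φ => D i ∘ₗ φ) LinearMap.id

theorem wordOp_cons_apply (i : Fin n) (l : List (Fin n)) (P : MvPolynomial (Fin (n + 1)) R) :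
    wordOp D (i :: l) P = D i (wordOp D l P) := rfl

theorem foldr_eq_wordOp (l : List (Fin n)) (P : MvPolynomial (Fin (n + 1)) R) :
    l.foldr (fun i Q => D i Q) P = wordOp D l P := by
  induction l with
  | nil => rfl
  | cons i l ih => rw [List.foldr_cons, ih, wordOp_cons_apply]

theorem IsDemazure.wordOp_symmetric_mul (hD : IsDemazure D) (l : List (Fin n))
    {f : MvPolynomial (Fin (n + 1)) R} (hf : f.IsSymmetric) (P : MvPolynomial (Fin (n + 1)) R) :
    wordOp D l (f * P) = f * wordOp D l P := by
  induction l with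
  | nil => rfl
  | cons i l ih => rw [wordOp_cons_apply, ih, hD.apply_symmetric_mul i hf, wordOp_cons_apply]

/-- `∂_l` as a linear map over the ring of symmetric polynomials. -/
noncomputable def IsDemazure.symmetricWordOp (hD : IsDemazure D) (l : List (Fin n)) :
    MvPolynomial (Fin (n + 1)) R
      →ₗ[symmetricSubalgebra (Fin (n + 1)) R] MvPolynomial (Fin (n + 1)) R where
  __ := wordOp D l
  map_smul' f P := hD.wordOp_symmetric_mul l f.2 P

theorem IsDemazure.totalDegree_wordOp_add_length_le (hD : IsDemazure D) (l : List (Fin n))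
    {P : MvPolynomial (Fin (n + 1)) R} (hP : wordOp D l P ≠ 0) :
    (wordOp D l P).totalDegree + l.length ≤ P.totalDegree := by
  induction l with
  | nil => exact le_rfl
  | cons i l ih =>
    rw [wordOp_cons_apply] at hP ⊢
    have hlt := hD.totalDegree_apply_lt i hP
    have hle := ih fun h => hP (by rw [h, map_zero])
    rw [List.length_cons]
    omega

theorem IsDemazure.wordOp_eq_zero (hD : IsDemazure D) {l : List (Fin n)}
    {P : MvPolynomial (Fin (n + 1)) R} (hP : P.totalDegree < l.length) : wordOp D l P = 0 := by
  by_contra h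
  have := hD.totalDegree_wordOp_add_length_le l h
  omega

theorem IsDemazure.exists_wordOp_eq_C (hD : IsDemazure D) {l : List (Fin n)}
    {P : MvPolynomial (Fin (n + 1)) R} (hP : P.totalDegree ≤ l.length) :
    ∃ c, wordOp D l P = C c := by
  by_cases h : wordOp D l P = 0
  · exact ⟨0, by rw [h, map_zero]⟩
  · have := hD.totalDegree_wordOp_add_length_le l h
    exact ⟨_, totalDegree_eq_zero_iff_eq_C.1 (by omega)⟩

end Operators

section LongestWord

variable {R : Type*} [CommRing R] {n : ℕ}
  {D : Fin n → MvPolynomial (Fin (n + 1)) R →ₗ[R] MvPolynomial (Fin (n + 1)) R}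
  {l : List (Fin n)} {c : R}

theorem IsDemazure.sum_mul_wordOp_rightFactor (hD : IsDemazure D)
    (hl : (posPairs (n + 1)).card ≤ l.length)
    (h : Finset (Fin (n + 1) × Fin (n + 1)) → MvPolynomial (Fin (n + 1)) R) :
    ∑ S ∈ (posPairs (n + 1)).powerset, h S * wordOp D l (rightFactor R S) =
      h (posPairs (n + 1)) * wordOp D l (rightFactor R (posPairs (n + 1))) := by
  refine Finset.sum_eq_single_of_mem _ (Finset.mem_powerset_self _) fun S hS hne => ?_
  have hcard := Finset.card_lt_card ((Finset.mem_powerset.1 hS).ssubset_of_ne hne)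
  rw [hD.wordOp_eq_zero ((totalDegree_rightFactor_le R S).trans_lt (hcard.trans_le hl)), mul_zero]

theorem IsDemazure.vandermonde_mul_wordOp (hD : IsDemazure D)
    (hl : (posPairs (n + 1)).card ≤ l.length)
    (hc : wordOp D l (rightFactor R (posPairs (n + 1))) = C c)
    (P : MvPolynomial (Fin (n + 1)) R) :
    vandermonde R (n + 1) * wordOp D l P = C c * antisymmetrize P := by
  set V := vandermonde R (n + 1)
  have hV : IsAlternating V := isAlternating_vandermonde R
  have symm (Q) : (V * antisymmetrize Q).IsSymmetric := hV.mul (isAlternating_antisymmetrize Q)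
  refine (isRegular_vandermonde R).left ?_
  calc V * (V * wordOp D l P) = wordOp D l (V * (V * P)) := by
        rw [← mul_assoc, ← hD.wordOp_symmetric_mul l (hV.mul hV), mul_assoc]
    _ = ∑ S ∈ (posPairs (n + 1)).powerset,
          V * antisymmetrize (leftFactor R S * P) * wordOp D l (rightFactor R S) := by
        rw [← sum_rightFactor_mul_antisymmetrize P, Finset.mul_sum, map_sum]
        refine Finset.sum_congr rfl fun S _ => ?_
        rw [mul_left_comm, mul_comm, hD.wordOp_symmetric_mul l (symm _)]
    _ = V * (C c * antisymmetrize P) := by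
        rw [hD.sum_mul_wordOp_rightFactor hl, leftFactor_posPairs, one_mul, hc, mul_assoc,
          mul_comm (C c)]

theorem isSymmetric_wordOp
    (hc : ∀ P, vandermonde R (n + 1) * wordOp D l P = C c * antisymmetrize P)
    (P : MvPolynomial (Fin (n + 1)) R) : (wordOp D l P).IsSymmetric := by
  refine (isAlternating_vandermonde R).isSymmetric_of_mul (isRegular_vandermonde R) ?_
  rw [hc]
  exact (isAlternating_antisymmetrize P).symmetric_mul (IsSymmetric.C c)

theorem sum_rightFactor_mul_wordOp
    (hc : ∀ P, vandermonde R (n + 1) * wordOp D l P = C c * antisymmetrize P)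
    (b : MvPolynomial (Fin (n + 1)) R) :
    ∑ S ∈ (posPairs (n + 1)).powerset, rightFactor R S * wordOp D l (leftFactor R S * b) =
      C c * b := by
  refine (isRegular_vandermonde R).left ?_
  simp_rw [Finset.mul_sum, mul_left_comm (vandermonde R (n + 1)), hc, mul_left_comm _ (C c),
    ← Finset.mul_sum, sum_rightFactor_mul_antisymmetrize]

end LongestWord

section Localization

variable {R : Type*} [CommRing R] {n : ℕ}
  {D : Fin n → MvPolynomial (Fin (n + 1)) R →ₗ[R] MvPolynomial (Fin (n + 1)) R}
  {l : List (Fin n)}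

/-- The image of the kernel `∏_{i < j} (Y_j - X_i)` under `∂_l`, acting on the variables `Y`,
localized at the permutation `w`, that is, evaluated at `X_i = Y_{w i}`. -/
noncomputable def localization
    (D : Fin n → MvPolynomial (Fin (n + 1)) R →ₗ[R] MvPolynomial (Fin (n + 1)) R)
    (l : List (Fin n)) (w : Equiv.Perm (Fin (n + 1))) : MvPolynomial (Fin (n + 1)) R :=
  ∑ S ∈ (posPairs (n + 1)).powerset, rename w (leftFactor R S) * wordOp D l (rightFactor R S)

theorem localization_nil (w : Equiv.Perm (Fin (n + 1))) :
    localization D [] w = if w = 1 then vandermonde R (n + 1) else 0 :=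
  sum_rename_leftFactor_mul_rightFactor R w

theorem IsDemazure.simpleRoot_mul_localization_cons (hD : IsDemazure D) (i : Fin n)
    (l : List (Fin n)) (w : Equiv.Perm (Fin (n + 1))) :
    (X i.succ - X i.castSucc) * localization D (i :: l) w =
      localization D l w - rename (adjTrans n i) (localization D l (adjTrans n i * w)) := by
  simp_rw [localization, map_sum, map_mul, rename_rename, ← Equiv.Perm.coe_mul,
    adjTrans_mul_cancel_left]
  rw [← Finset.sum_sub_distrib, Finset.mul_sum]
  refine Finset.sum_congr rfl fun S _ => ?_
  rw [← mul_sub, mul_left_comm, wordOp_cons_apply, hD]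

theorem IsDemazure.localization_eq_zero (hD : IsDemazure D) {w : Equiv.Perm (Fin (n + 1))}
    (hw : l.length < inversions w) : localization D l w = 0 := by
  induction l generalizing w with
  | nil =>
    rw [localization_nil, if_neg]
    rintro rfl
    exact hw.ne' (inversions_one _)
  | cons i l ih =>
    have hinv := inversions_le_adjTrans_mul i w
    rw [List.length_cons] at hw
    rw [← (isRegular_simpleRoot i).left.mul_left_eq_zero_iff,
      hD.simpleRoot_mul_localization_cons, ih (by omega), ih (by omega), map_zero, sub_zero]

theorem IsDemazure.localization_prod_dvd (hD : IsDemazure D)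
    (hl : l.length ≤ inversions (l.map (adjTrans n)).prod) :
    localization D l (l.map (adjTrans n)).prod ∣
      rename (l.map (adjTrans n)).prod (vandermonde R (n + 1)) := by
  induction l with
  | nil => simp [localization_nil]
  | cons i l ih =>
    simp only [List.map_cons, List.prod_cons, List.length_cons] at hl ⊢
    set w := (l.map (adjTrans n)).prod
    have hinv := inversions_adjTrans_mul_le i w
    have hroot : (X i.succ - X i.castSucc) * localization D (i :: l) (adjTrans n i * w) =
        -rename (adjTrans n i) (localization D l w) := by
      rw [hD.simpleRoot_mul_localization_cons, hD.localization_eq_zero (by omega),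
        adjTrans_mul_cancel_left, zero_sub]
    calc localization D (i :: l) (adjTrans n i * w)
      _ ∣ rename (adjTrans n i) (localization D l w) :=
          (dvd_neg (α := MvPolynomial _ R)).1 (Dvd.intro_left _ hroot)
      _ ∣ rename (adjTrans n i) (rename w (vandermonde R (n + 1))) :=
          map_dvd _ (ih (by omega))
      _ = rename (adjTrans n i * w) (vandermonde R (n + 1)) := by
          rw [rename_rename, Equiv.Perm.coe_mul]

theorem IsDemazure.isUnit_of_wordOp_rightFactor_eq_C (hD : IsDemazure D)
    (hl : (posPairs (n + 1)).card ≤ l.length)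
    (hred : l.length ≤ inversions (l.map (adjTrans n)).prod) {c : R}
    (hc : wordOp D l (rightFactor R (posPairs (n + 1))) = C c) : IsUnit c := by
  have hdvd := hD.localization_prod_dvd hred
  rw [localization, hD.sum_mul_wordOp_rightFactor hl, leftFactor_posPairs, map_one, one_mul, hc,
    isAlternating_vandermonde, Units.smul_def, zsmul_eq_mul] at hdvd
  have hsign : IsUnit ((Equiv.Perm.sign (l.map (adjTrans n)).prod : ℤ) :
      MvPolynomial (Fin (n + 1)) R) :=
    (Units.isUnit _).map (Int.castRingHom _)
  exact isUnit_of_C_dvd (isUnit_leadingCoeff_vandermonde R) (hsign.dvd_mul_left.1 hdvd)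

end Localization

end Demazure

open Demazure in
theorem demazure_longest_is_symmetrizing_form_general {R : Type*} [CommRing R] (n : ℕ)
    (D : Fin n → MvPolynomial (Fin (n + 1)) R →ₗ[R] MvPolynomial (Fin (n + 1)) R)
    (hD : ∀ (i : Fin n) (P : MvPolynomial (Fin (n + 1)) R),
      (X i.succ - X i.castSucc) * D i P =
        P - rename (Equiv.swap i.castSucc i.succ) P)
    (l0 : List (Fin n))
    (hl0 : ((l0.map (adjTrans n)).prod = (Fin.revPerm : Equiv.Perm (Fin (n + 1)))))
    (hlen : l0.length = (n + 1) * n / 2) :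
    (∀ P : MvPolynomial (Fin (n + 1)) R,
      (l0.foldr (fun i Q => D i Q) P).IsSymmetric) ∧
    (∀ ψ : MvPolynomial (Fin (n + 1)) R
        →ₗ[symmetricSubalgebra (Fin (n + 1)) R] MvPolynomial (Fin (n + 1)) R,
      (∀ b, (ψ b).IsSymmetric) →
      ∃! a : MvPolynomial (Fin (n + 1)) R,
        ∀ b : MvPolynomial (Fin (n + 1)) R,
          ψ b = l0.foldr (fun i Q => D i Q) (a * b)) := by
  have hDem : IsDemazure D := hD
  have hcard : (posPairs (n + 1)).card = l0.length := by
    rw [card_posPairs, hlen, Nat.add_sub_cancel]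
  obtain ⟨c, hc⟩ := hDem.exists_wordOp_eq_C ((totalDegree_rightFactor_le R _).trans hcard.le)
  obtain ⟨u, rfl⟩ := hDem.isUnit_of_wordOp_rightFactor_eq_C hcard.le
    (by rw [hl0, inversions_revPerm, hcard]) hc
  have hanti := hDem.vandermonde_mul_wordOp hcard.le hc
  simp_rw [foldr_eq_wordOp]
  refine ⟨isSymmetric_wordOp hanti, fun ψ hψ => ?_⟩
  have hdual (b) : ∑ S ∈ (posPairs (n + 1)).powerset,
      C (↑u⁻¹ : R) * rightFactor R S * wordOp D l0 (leftFactor R S * b) = b := by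
    simp_rw [mul_assoc, ← Finset.mul_sum]
    rw [sum_rightFactor_mul_wordOp hanti, ← mul_assoc, ← C_mul, Units.inv_mul, C_1, one_mul]
  exact existsUnique_eq_apply_mul_of_dualBases (t := hDem.symmetricWordOp l0)
    (isSymmetric_wordOp hanti) hdual hψ

/-- Let `∂_{w0}` be the composite of Demazure operators associated to a reduced
expression of the longest element `w0` of `S_{n+1}`. Then (a) `∂_{w0}(P)` is a
symmetric polynomial for every `P`; and (b) `∂_{w0}` is a symmetrizing form for
`P_n = ℤ[X_1, …, X_{n+1}]` over the subring `P_n^{S_{n+1}}` of symmetric polynomials: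
the map `a ↦ (b ↦ ∂_{w0}(ab))` from `P_n` to the `P_n^{S_{n+1}}`-linear forms on `P_n`
with values in `P_n^{S_{n+1}}` is bijective.  (A `P_n^{S_{n+1}}`-linear form on `P_n` is
encoded as a `P_n^{S_{n+1}}`-linear map `ψ : P_n → P_n` all of whose values are
symmetric polynomials.) -/
theorem demazure_longest_is_symmetrizing_form (n : ℕ)
    (D : Fin n → MvPolynomial (Fin (n + 1)) ℤ →ₗ[ℤ] MvPolynomial (Fin (n + 1)) ℤ)
    (hD : ∀ (i : Fin n) (P : MvPolynomial (Fin (n + 1)) ℤ),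
      (X i.succ - X i.castSucc) * D i P =
        P - rename (Equiv.swap i.castSucc i.succ) P)
    (l0 : List (Fin n))
    (hl0 : ((l0.map (adjTrans n)).prod = (Fin.revPerm : Equiv.Perm (Fin (n + 1)))))
    (hlen : l0.length = (n + 1) * n / 2) :
    (∀ P : MvPolynomial (Fin (n + 1)) ℤ,
      (l0.foldr (fun i Q => D i Q) P).IsSymmetric) ∧
    (∀ ψ : MvPolynomial (Fin (n + 1)) ℤ
        →ₗ[symmetricSubalgebra (Fin (n + 1)) ℤ] MvPolynomial (Fin (n + 1)) ℤ,
      (∀ b, (ψ b).IsSymmetric) →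
      ∃! a : MvPolynomial (Fin (n + 1)) ℤ,
        ∀ b : MvPolynomial (Fin (n + 1)) ℤ,
          ψ b = l0.foldr (fun i Q => D i Q) (a * b)) :=
  demazure_longest_is_symmetrizing_form_general n D hD l0 hl0 hlen
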